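/- arXiv:2304.08476 — 2 statements merged into one kernel-verified Lean document; each statement's English description precedes it below -/
import Mathlib

section
/- Let (N,d) be a differential graded Λ(ι_1,…,ι_m)-module and let i,j ∈ [m]. Suppose the primary operations δ_{v_i} : H^∗(N) → H^{∗−1}(N), [α] ↦ [ι_iα], and δ_{v_j} : [α] ↦ [ι_jα] both vanish on H^∗(N). Then for every cocycle α ∈ N^n and every choice of β_i, β_j ∈ N^{n−2} with dβ_i = ι_iα and dβ_j = ι_jα, the element ι_iβ_j + ι_jβ_i is a cocycle, and its cohomology class in H^{n−3}(N) depends only on the class [α] (not on the choices of representative α or of β_i, β_j). Hence the secondary operation δ_{v_iv_j} : H^n(N) → H^{n−3}(N), [α] ↦ [ι_iβ_j + ι_jβ_i], is well defined. -/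
/-!
The cocycle claim is `d (ι_i β_j + ι_j β_i) = -(ι_i ι_j + ι_j ι_i) α = 0`.
For independence of choices, suppose `dγ = α - α'`. The elements `η_l = β_l - β_l' + ι_l γ`
are cocycles for `l = i, j`, because `d ι_l γ = -ι_l (α - α')`. Since the primary operations
vanish, `ι_i η_j` and `ι_j η_i` are exact, and their sum is the difference of the two
representatives because `ι_i ι_j γ + ι_j ι_i γ = 0`.
-/

theorem statement3 (k : Type) [Field k] (m : ℕ) (N : ℤ → Type)
    [∀ n, AddCommGroup (N n)] [∀ n, Module k (N n)]
    (d : ∀ n : ℤ, N n →ₗ[k] N (n + 1))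
    (hdd : ∀ (n : ℤ) (x : N n), d (n + 1) (d n x) = 0)
    (ι : Fin m → ∀ n : ℤ, N (n + 1) →ₗ[k] N n)
    (hι2 : ∀ (l : Fin m) (n : ℤ) (x : N (n + 1 + 1)), ι l n (ι l (n + 1) x) = 0)
    (hιι : ∀ (l p : Fin m) (n : ℤ) (x : N (n + 1 + 1)),
      ι l n (ι p (n + 1) x) + ι p n (ι l (n + 1) x) = 0)
    (hιd : ∀ (l : Fin m) (n : ℤ) (x : N (n + 1)),
      d n (ι l n x) + ι l (n + 1) (d (n + 1) x) = 0)
    (i j : Fin m)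
    (hi : ∀ (n : ℤ) (α : N (n + 1 + 1)), d (n + 1 + 1) α = 0 → ∃ β : N n, d n β = ι i (n + 1) α)
    (hj : ∀ (n : ℤ) (α : N (n + 1 + 1)), d (n + 1 + 1) α = 0 → ∃ β : N n, d n β = ι j (n + 1) α) :
    ∀ (n : ℤ) (α α' : N (n + 1 + 1 + 1 + 1)), d (n + 1 + 1 + 1 + 1) α = 0 → d (n + 1 + 1 + 1 + 1) α' = 0 →
      (∀ βi βj : N (n + 1 + 1), d (n + 1 + 1) βi = ι i (n + 1 + 1 + 1) α → d (n + 1 + 1) βj = ι j (n + 1 + 1 + 1) α →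
        d (n + 1) (ι i (n + 1) βj + ι j (n + 1) βi) = 0) ∧
      (∀ γ : N (n + 1 + 1 + 1), d (n + 1 + 1 + 1) γ = α - α' →
        ∀ βi βj βi' βj' : N (n + 1 + 1),
          d (n + 1 + 1) βi = ι i (n + 1 + 1 + 1) α → d (n + 1 + 1) βj = ι j (n + 1 + 1 + 1) α →
          d (n + 1 + 1) βi' = ι i (n + 1 + 1 + 1) α' → d (n + 1 + 1) βj' = ι j (n + 1 + 1 + 1) α' →
          ∃ w : N n, d n w =
            (ι i (n + 1) βj + ι j (n + 1) βi) - (ι i (n + 1) βj' + ι j (n + 1) βi')) := by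
  intro n α α' hα hα'
  constructor
  · intro βi βj hβi hβj
    have h1 := hιd i (n + 1) βj
    have h2 := hιd j (n + 1) βi
    rw [hβj] at h1
    rw [hβi] at h2
    rw [map_add, eq_neg_of_add_eq_zero_left h1, eq_neg_of_add_eq_zero_left h2, ← neg_add,
      hιι i j, neg_zero]
  · intro γ hγ βi βj βi' βj' hβi hβj hβi' hβj'
    have key : ∀ (l : Fin m) (β β' : N (n + 1 + 1)),
        d (n + 1 + 1) β = ι l (n + 1 + 1 + 1) α → d (n + 1 + 1) β' = ι l (n + 1 + 1 + 1) α' →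
        d (n + 1 + 1) (β - β' + ι l (n + 1 + 1) γ) = 0 := by
      intro l β β' h h'
      have h1 := hιd l (n + 1 + 1) γ
      rw [hγ] at h1
      rw [map_add, map_sub, h, h', ← map_sub]
      exact (add_comm _ _).trans h1
    obtain ⟨wi, hwi⟩ := hj n _ (key i βi βi' hβi hβi')
    obtain ⟨wj, hwj⟩ := hi n _ (key j βj βj' hβj hβj')
    refine ⟨wj + wi, ?_⟩
    rw [map_add, hwi, hwj]
    simp only [map_add, map_sub]
    rw [eq_neg_of_add_eq_zero_left (hιι i j (n + 1) γ)]
    abel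
end

section
/- Let R be a commutative ℕ-graded k-algebra with R_0 = k a field, and let 𝔪 = R_{>0} be its irrelevant maximal graded ideal. Let (F,d) be a bounded-below complex of finitely generated graded free R-modules whose differential satisfies d(F) ⊆ 𝔪F. If the homology module H_n(F) is a free R-module for every n, then d = 0, and consequently H_n(F) ≅ F_n for all n. -/
/-!
Let `d n` be the map from the `(n + 1)`-st module to the `n`-th one. By induction on `n`, starting
below the bound `N`, where the target is zero, suppose that `d n = 0`. The homology at the source
of `d n` is then the cokernel of `d (n + 1)`. Since it is free, hence projective, the image `K` of
`d (n + 1)` is a direct summand, and applying a projection onto `K` to vectors with all coordinates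
in `𝔪` turns `K ⊆ 𝔪F` into `K ⊆ 𝔪K` (`range_le_smul_range`). As `K` is finitely generated,
Nakayama's lemma gives `r ∈ 1 + 𝔪` killing `K`. The matrix entries of `d (n + 1)` are homogeneous,
and a homogeneous element killed by an element of `1 + 𝔪` vanishes
(`homogeneous_eq_zero_of_mul_eq_zero`), so `d (n + 1) = 0`.
-/

open Classical

/-- The degree-`c` component of `r * a` is `r₀ * a = a`, so no nonzero homogeneous element is killed by
an element of `1 + 𝔪`; this replaces the assumption `𝔪 ≤ rad R` of the local Nakayama lemma. -/
theorem homogeneous_eq_zero_of_mul_eq_zero {k R : Type} [Field k] [CommRing R] [Algebra k R]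
    (𝒜 : ℕ → Submodule k R) [GradedAlgebra 𝒜] {r a : R} {c : ℕ}
    (hr : r - 1 ∈ Ideal.span (⋃ (c : ℕ) (_ : 0 < c), (𝒜 c : Set R)))
    (ha : a ∈ 𝒜 c) (hra : r * a = 0) : a = 0 := by
  have hle : Ideal.span (⋃ (c : ℕ) (_ : 0 < c), (𝒜 c : Set R)) ≤
      RingHom.ker (GradedRing.projZeroRingHom 𝒜) := by
    rw [Ideal.span_le]
    intro x hx
    simp only [Set.mem_iUnion] at hx
    obtain ⟨e, he, hx⟩ := hx
    exact DirectSum.decompose_of_mem_ne 𝒜 hx he.ne'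
  have hr0 : GradedRing.projZeroRingHom 𝒜 r = 1 := by
    have h := hle hr
    rw [RingHom.mem_ker, map_sub, map_one, sub_eq_zero] at h
    exact h
  have h := DirectSum.coe_decompose_mul_of_right_mem_of_le 𝒜 (a := r) ha (le_refl c)
  rw [hra, Nat.sub_self, DirectSum.decompose_zero] at h
  have h1 : ((DirectSum.decompose 𝒜 r 0 : 𝒜 0) : R) = 1 := hr0
  rw [h1, one_mul] at h
  simpa using h.symm

/-- If `f = 0` and `ker f / im g`, i.e. `coker g`, is projective, then the image of `g` is a direct
summand, so that `im g ⊆ I F` implies `im g ⊆ I (im g)`. -/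
theorem range_le_smul_range {R ι κ M : Type} [CommRing R] [Finite ι] [Finite κ]
    [AddCommGroup M] [Module R M] (I : Ideal R)
    (f : (κ → R) →ₗ[R] M) (hf : f = 0) (g : (ι → R) →ₗ[R] (κ → R))
    (hg : ∀ j i, g (Pi.single j 1) i ∈ I)
    [Module.Projective R (LinearMap.ker f ⧸
      (LinearMap.range g).comap (LinearMap.ker f).subtype)] :
    LinearMap.range g ≤ I • LinearMap.range g := by
  have := Fintype.ofFinite ι
  have := Fintype.ofFinite κ
  set Q := (LinearMap.range g).comap (LinearMap.ker f).subtype with hQ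
  obtain ⟨s, hs⟩ := Module.projective_lifting_property Q.mkQ LinearMap.id Q.mkQ_surjective
  have hs' : ∀ q, Q.mkQ (s q) = q := fun q => LinearMap.congr_fun hs q
  let j : (κ → R) →ₗ[R] LinearMap.ker f := LinearMap.id.codRestrict _ (by simp [hf])
  -- The projection onto the image of `g` along the chosen complement.
  let p : (κ → R) →ₗ[R] (κ → R) :=
    (LinearMap.ker f).subtype ∘ₗ (j - s ∘ₗ Q.mkQ ∘ₗ j)
  have hp : ∀ x, p x ∈ LinearMap.range g := by
    intro x
    have : (j x - s (Q.mkQ (j x))) ∈ Q := by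
      rw [← Submodule.Quotient.mk_eq_zero, ← Submodule.mkQ_apply, map_sub, hs', sub_self]
    exact this
  have hpid : ∀ x ∈ LinearMap.range g, p x = x := by
    intro x hx
    have : Q.mkQ (j x) = 0 := by
      rw [Submodule.mkQ_apply, Submodule.Quotient.mk_eq_zero]
      exact hx
    simp only [p, LinearMap.comp_apply, LinearMap.sub_apply, this, map_zero, sub_zero]
    rfl
  rintro _ ⟨y, rfl⟩
  have hI : ∀ i, g y i ∈ I := by
    intro i
    rw [LinearMap.pi_apply_eq_sum_univ g y, Finset.sum_apply]
    refine I.sum_mem fun l _ => I.mul_mem_left _ ?_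
    convert hg l i using 2
    refine funext fun m => ?_
    simp [Pi.single_apply, eq_comm]
  rw [← hpid (g y) ⟨y, rfl⟩, LinearMap.pi_apply_eq_sum_univ p (g y)]
  exact Submodule.sum_mem _ fun i _ => Submodule.smul_mem_smul (hI i) (hp _)

theorem statement7 (k : Type) [Field k] (R : Type) [CommRing R] [Algebra k R]
    (𝒜 : ℕ → Submodule k R) [GradedAlgebra 𝒜] (h0 : 𝒜 0 = (1 : Submodule k R))
    (β : ℤ → Type) [∀ n, Finite (β n)] (deg : ∀ n, β n → ℤ)
    (N : ℤ) (hbdd : ∀ n < N, IsEmpty (β n))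
    (d : ∀ n : ℤ, (β (n + 1) → R) →ₗ[R] (β n → R))
    (hdd : ∀ n, (d n).comp (d (n + 1)) = 0)
    (hgraded : ∀ (n : ℤ) (j : β (n + 1)) (i : β n),
      (∃ c : ℕ, (c : ℤ) = deg (n + 1) j - deg n i ∧ d n (Pi.single j 1) i ∈ 𝒜 c) ∨
        d n (Pi.single j 1) i = 0)
    (hmin : ∀ (n : ℤ) (j : β (n + 1)) (i : β n),
      d n (Pi.single j 1) i ∈ Ideal.span (⋃ (c : ℕ) (_ : 0 < c), (𝒜 c : Set R)))
    (hfree : ∀ n : ℤ, Module.Free R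
      (LinearMap.ker (d n) ⧸
        (LinearMap.range (d (n + 1))).comap (LinearMap.ker (d n)).subtype)) :
    (∀ n, d n = 0) ∧
    ∀ n : ℤ, Nonempty
      ((LinearMap.ker (d n) ⧸
          (LinearMap.range (d (n + 1))).comap (LinearMap.ker (d n)).subtype)
        ≃ₗ[R] (β (n + 1) → R)) := by
  have step : ∀ n, d n = 0 → d (n + 1) = 0 := by
    intro n hn
    have := hfree n
    have hle := range_le_smul_range _ (d n) hn (d (n + 1)) (hmin (n + 1))
    obtain ⟨r, hr, hrK⟩ := Submodule.exists_sub_one_mem_and_smul_eq_zero_of_fg_of_le_smul _ _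
      (Module.Finite.iff_fg.mp inferInstance) hle
    refine LinearMap.pi_ext' fun j => LinearMap.ext_ring (funext fun i => ?_)
    change d (n + 1) (Pi.single j 1) i = 0
    rcases hgraded (n + 1) j i with ⟨c, -, hc⟩ | h
    · exact homogeneous_eq_zero_of_mul_eq_zero 𝒜 hr hc (congrFun (hrK _ ⟨_, rfl⟩) i)
    · exact h
  have low : ∀ n < N, d n = 0 := by
    intro n hn
    have := hbdd n hn
    exact LinearMap.ext fun _ => Subsingleton.elim _ _
  have hd : ∀ n, d n = 0 := by
    intro n
    rcases lt_or_ge n N with hn | hn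
    · exact low n hn
    · have base : d (N - 1) = 0 := low _ (by omega)
      exact Int.leInduction (m := N - 1) (motive := fun n _ => d n = 0) base
        (fun n _ h => step n h) n (by omega)
  refine ⟨hd, fun n => ⟨?_⟩⟩
  refine (Submodule.quotEquivOfEqBot _ ?_).trans (LinearEquiv.ofTop _ ?_)
  · rw [hd (n + 1), LinearMap.range_zero, Submodule.comap_bot, Submodule.ker_subtype]
  · rw [hd n, LinearMap.ker_zero]
end
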